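/- Let R be a regular local ring of Krull dimension 2, and let I be a finitely generated R-module that is torsion (i.e., I ⊗_R Frac(R) = 0) and has no nonzero submodule of finite length. Then Ext^1_R(I, R) is a finitely generated R-module that is again torsion and has no nonzero submodule of finite length. -/

import Mathlib

open CategoryTheory

/-- A (commutative, local) ring is a *regular local ring of Krull dimension 2* if it is
Noetherian, has Krull dimension 2, and its maximal ideal is generated by 2 elements. -/
def IsRegularLocalRingOfDimTwo (R : Type*) [CommRing R] [IsLocalRing R] : Prop :=
  IsNoetherianRing R ∧ ringKrullDim R = 2 ∧
    ∃ x y : R, IsLocalRing.maximalIdeal R = Ideal.span {x, y}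

/-!
Let `a` be a nonzerodivisor killing `I`, and let `0 → K → F → I → 0` be exact with `F` projective,
so that `Ext¹(I, N) = Hom(K, N) / Hom(F, N)`. Since `aF ⊆ K`, a map `f : K → N` extends to `F` if
and only if `f (a p)` is divisible by `a` for every `p ∈ F`, the extension being `p ↦ f (a p) / a`.
Hence `f ↦ (p ↦ f (a p) mod a)` embeds `Ext¹(I, N)` into `Hom(I, N / aN)`, which is finitely
generated and killed by `a`. If `N` has depth at least `2`, then `N / aN` has no nonzero element
killed by the maximal ideal; this passes to `Hom(I, N / aN)` and its submodules, so none of these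
is simple, and hence none of them is nonzero of finite length.

A regular local ring of dimension `n` has depth `n`: generators `x₁, …, xₙ` of its maximal ideal
form a regular sequence. By induction `R / (x₁)` is a domain. A prime `q` at the bottom of a chain
of maximal length lies strictly inside `(x₁)`, so `q = x₁ q` and `q = 0` by Nakayama. Thus `R` is
a domain and `x₁ ≠ 0`.
-/

section RegularLocalRing

open IsLocalRing RingTheory.Sequence
open scoped Pointwise

theorem exists_isPrime_ringKrullDim_quotient_eq (R : Type*) [CommRing R] [FiniteRingKrullDim R] :
    ∃ q : Ideal R, q.IsPrime ∧ ringKrullDim (R ⧸ q) = ringKrullDim R := by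
  let chain := LTSeries.longestOf (PrimeSpectrum R)
  have hIci : PrimeSpectrum.zeroLocus (chain.head.asIdeal : Set R) = Set.Ici chain.head := rfl
  refine ⟨chain.head.asIdeal, chain.head.isPrime, ?_⟩
  rw [ringKrullDim_quotient, hIci, ← Order.coheight_eq_krullDim_Ici, ringKrullDim]
  refine le_antisymm (Order.coheight_le_krullDim _) ?_
  rw [Order.krullDim_eq_length_of_finiteDimensionalOrder]
  exact_mod_cast Order.length_le_coheight_head

variable {R : Type*} [CommRing R]

theorem isWeaklyRegular_cons_of_quotient_span_singleton {x : R} {rs : List R}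
    (hx : IsSMulRegular R x)
    (hrs : IsWeaklyRegular (R ⧸ Ideal.span {x}) (rs.map (Ideal.Quotient.mk (Ideal.span {x})))) :
    IsWeaklyRegular R (x :: rs) := by
  have hspan : x • (⊤ : Ideal R) = Ideal.span {x} := by
    rw [← Submodule.ideal_span_singleton_smul, smul_eq_mul, Ideal.mul_top]
  exact .cons hx (((Submodule.quotEquivOfEq _ _ hspan).isWeaklyRegular_congr rs).2
    ((isWeaklyRegular_map_algebraMap_iff (R ⧸ Ideal.span {x}) _ rs).1 hrs))

variable [IsLocalRing R]

theorem isLocalRing_quotient_span_singleton {x : R} (hx : x ∈ maximalIdeal R) :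
    IsLocalRing (R ⧸ Ideal.span {x}) :=
  have : Nontrivial (R ⧸ Ideal.span {x}) :=
    Ideal.Quotient.nontrivial_iff.2 (mt Ideal.span_singleton_eq_top.1 hx)
  .of_surjective' _ Ideal.Quotient.mk_surjective

theorem maximalIdeal_quotient_span_singleton_eq_ofList {x : R} {rs : List R}
    [IsLocalRing (R ⧸ Ideal.span {x})]
    (hm : maximalIdeal R = Ideal.ofList (x :: rs)) :
    maximalIdeal (R ⧸ Ideal.span {x}) =
      Ideal.ofList (rs.map (Ideal.Quotient.mk (Ideal.span {x}))) := by
  rw [← map_maximalIdeal_of_surjective _ Ideal.Quotient.mk_surjective, hm, Ideal.ofList_cons,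
    Ideal.map_sup, Ideal.map_quotient_self, bot_sup_eq, Ideal.map_ofList]

variable [IsNoetherianRing R]

theorem ringKrullDim_le_ringKrullDim_quotient_span_singleton_add_one {x : R}
    (hx : x ∈ maximalIdeal R) : ringKrullDim R ≤ ringKrullDim (R ⧸ Ideal.span {x}) + 1 := by
  rw [← maximalIdeal_height_eq_ringKrullDim]
  exact Ideal.height_le_ringKrullDim_quotient_add_one hx

theorem ringKrullDim_le_length_of_maximalIdeal_eq_ofList {rs : List R}
    (hm : maximalIdeal R = Ideal.ofList rs) : ringKrullDim R ≤ rs.length := by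
  classical
  have hle : (maximalIdeal R).spanFinrank ≤ rs.length := by
    rw [hm, Ideal.ofList, ← List.coe_toFinset]
    exact (Submodule.spanFinrank_span_le_ncard_of_finite (Finset.finite_toSet _)).trans
      ((Set.ncard_coe_finset _).trans_le rs.toFinset_card_le)
  exact (ringKrullDim_le_spanFinrank_maximalIdeal R).trans (by exact_mod_cast hle)

theorem exists_isPrime_lt_span_singleton {x : R} (hx : (Ideal.span {x}).IsPrime)
    (hdim : ringKrullDim (R ⧸ Ideal.span {x}) < ringKrullDim R) :
    ∃ q : Ideal R, q.IsPrime ∧ q < Ideal.span {x} := by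
  obtain ⟨q, hq, hq_dim⟩ := exists_isPrime_ringKrullDim_quotient_eq R
  suffices hqx : q ≤ Ideal.span {x} from
    ⟨q, hq, hqx.lt_of_ne fun h => hdim.ne (h ▸ hq_dim)⟩
  by_contra hqx
  obtain ⟨r, hrq, hrx⟩ := SetLike.not_le_iff_exists.1 hqx
  have : IsLocalRing (R ⧸ q) := .of_surjective' _ Ideal.Quotient.mk_surjective
  let toQuotient : R →+* (R ⧸ q) ⧸ Ideal.span {Ideal.Quotient.mk q x} :=
    (Ideal.Quotient.mk _).comp (Ideal.Quotient.mk q)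
  have hker : Ideal.span {x} ≤ RingHom.ker toQuotient :=
    (Ideal.span_singleton_le_iff_mem _).2
      (Ideal.Quotient.eq_zero_iff_mem.2 (Ideal.mem_span_singleton_self _))
  have hrr : toQuotient r = 0 := by
    simp [toQuotient, Ideal.Quotient.eq_zero_iff_mem.2 hrq]
  have hxm : Ideal.Quotient.mk q x ∈ maximalIdeal (R ⧸ q) := by
    rw [← map_maximalIdeal_of_surjective _ Ideal.Quotient.mk_surjective]
    exact Ideal.mem_map_of_mem _ (le_maximalIdeal hx.ne_top (Ideal.mem_span_singleton_self x))
  refine hdim.not_ge ?_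
  calc ringKrullDim R = ringKrullDim (R ⧸ q) := hq_dim.symm
    _ ≤ ringKrullDim ((R ⧸ q) ⧸ Ideal.span {Ideal.Quotient.mk q x}) + 1 :=
      ringKrullDim_le_ringKrullDim_quotient_span_singleton_add_one hxm
    _ ≤ ringKrullDim (R ⧸ Ideal.span {x}) :=
      ringKrullDim_succ_le_of_surjective (Ideal.Quotient.lift _ toQuotient hker)
        (Ideal.Quotient.lift_surjective_of_surjective _ _
          (Ideal.Quotient.mk_surjective.comp Ideal.Quotient.mk_surjective))
        (r := Ideal.Quotient.mk _ r)
        (mem_nonZeroDivisors_of_ne_zero (mt Ideal.Quotient.eq_zero_iff_mem.1 hrx)) hrr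

theorem isDomain_of_isPrime_lt_span_singleton {x : R} (hx : (Ideal.span {x}).IsPrime)
    {q : Ideal R} (hq : q.IsPrime) (hqx : q < Ideal.span {x}) : IsDomain R := by
  have hxq : x ∉ q := fun h => hqx.not_ge ((Ideal.span_singleton_le_iff_mem q).2 h)
  have hxm : x ∈ maximalIdeal R := le_maximalIdeal hx.ne_top (Ideal.mem_span_singleton_self x)
  have hq_le : q ≤ maximalIdeal R • q := by
    intro r hr
    obtain ⟨c, rfl⟩ := Ideal.mem_span_singleton.1 (hqx.le hr)
    exact Submodule.smul_mem_smul hxm ((hq.mem_or_mem hr).resolve_left hxq)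
  have hq_bot : q = ⊥ := Submodule.eq_bot_of_le_smul_of_le_jacobson_bot _ q
    (IsNoetherian.noetherian q) hq_le (maximalIdeal_le_jacobson _)
  exact IsDomain.of_bot_isPrime R (hbp := hq_bot ▸ hq)

theorem isDomain_and_isWeaklyRegular_of_maximalIdeal_eq_ofList {rs : List R}
    (hm : maximalIdeal R = Ideal.ofList rs) (hdim : rs.length ≤ ringKrullDim R) :
    IsDomain R ∧ IsWeaklyRegular R rs := by
  induction hn : rs.length generalizing R with
  | zero =>
    obtain rfl := List.length_eq_zero_iff.1 hn
    rw [Ideal.ofList_nil, ← isField_iff_maximalIdeal_eq] at hm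
    exact ⟨hm.isDomain, .nil R R⟩
  | succ n ih =>
    obtain ⟨x, rs, rfl⟩ := List.exists_cons_of_length_eq_add_one hn
    have hxm : x ∈ maximalIdeal R := hm ▸ Ideal.subset_span List.mem_cons_self
    have : IsLocalRing (R ⧸ Ideal.span {x}) := isLocalRing_quotient_span_singleton hxm
    have hm_quot := maximalIdeal_quotient_span_singleton_eq_ofList hm
    have hlen : (rs.map (Ideal.Quotient.mk (Ideal.span {x}))).length = rs.length :=
      List.length_map _
    have hdim_le : ringKrullDim (R ⧸ Ideal.span {x}) ≤ rs.length :=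
      hlen ▸ ringKrullDim_le_length_of_maximalIdeal_eq_ofList hm_quot
    have hdim_succ : (rs.length : WithBot ℕ∞) + 1 ≤ ringKrullDim R := by
      simpa only [List.length_cons, Nat.cast_add, Nat.cast_one] using hdim
    have hdim_ge : rs.length ≤ ringKrullDim (R ⧸ Ideal.span {x}) :=
      ENat.WithBot.add_le_add_one_right_iff.1
        (hdim_succ.trans (ringKrullDim_le_ringKrullDim_quotient_span_singleton_add_one hxm))
    obtain ⟨_, hrs⟩ := ih hm_quot (hlen ▸ hdim_ge) (hlen.trans (Nat.succ_injective hn))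
    have hx_prime : (Ideal.span {x}).IsPrime := (Ideal.Quotient.isDomain_iff_prime _).1 ‹_›
    obtain ⟨q, hq, hqx⟩ := exists_isPrime_lt_span_singleton hx_prime
      (hdim_le.trans_lt (ENat.WithBot.add_one_le_iff.1 hdim_succ))
    have : IsDomain R := isDomain_of_isPrime_lt_span_singleton hx_prime hq hqx
    have hx_ne : x ≠ 0 := fun h => hqx.not_ge (by simp [h])
    exact ⟨this, isWeaklyRegular_cons_of_quotient_span_singleton (.of_ne_zero hx_ne) hrs⟩

theorem IsRegularLocalRingOfDimTwo.exists_isWeaklyRegular {R : Type*} [CommRing R] [IsLocalRing R]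
    (hreg : IsRegularLocalRingOfDimTwo R) :
    ∃ x ∈ maximalIdeal R, ∃ y ∈ maximalIdeal R, IsWeaklyRegular R [x, y] := by
  obtain ⟨_, hdim, x, y, hm⟩ := hreg
  have hm_list : maximalIdeal R = Ideal.ofList [x, y] := by
    simp only [hm, Ideal.ofList_cons, Ideal.ofList_nil, sup_bot_eq, Ideal.span_insert]
  have hxy := (isDomain_and_isWeaklyRegular_of_maximalIdeal_eq_ofList hm_list hdim.ge).2
  exact ⟨x, hm ▸ Ideal.subset_span (.inl rfl), y, hm ▸ Ideal.subset_span (.inr rfl), hxy⟩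

end RegularLocalRing

theorem quotSMulTop_mk_eq_zero_iff {R N : Type*} [CommRing R] [AddCommGroup N] [Module R N]
    {a : R} {n : N} : (Submodule.Quotient.mk n : QuotSMulTop a N) = 0 ↔ ∃ m, a • m = n := by
  simp [Submodule.mem_smul_pointwise_iff_exists]

section TrivialSocle

open IsLocalRing RingTheory.Sequence

variable {R M N : Type*} [CommRing R] [IsLocalRing R] [AddCommGroup M] [Module R M]
  [AddCommGroup N] [Module R N]

/-- The socle of `M`, encoded as the set of elements killed by the maximal ideal of the local ring
`R`, is zero; for finite nonzero modules over a Noetherian `R` this is positivity of the depth. -/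
def HasTrivialSocle (R M : Type*) [CommRing R] [IsLocalRing R] [AddCommGroup M] [Module R M] :
    Prop :=
  ∀ m : M, (∀ r ∈ maximalIdeal R, r • m = 0) → m = 0

namespace HasTrivialSocle

theorem of_injective (hN : HasTrivialSocle R N) (f : M →ₗ[R] N) (hf : Function.Injective f) :
    HasTrivialSocle R M := fun m hm =>
  (map_eq_zero_iff f hf).1 (hN _ fun r hr => by rw [← map_smul, hm r hr, map_zero])

theorem linearMap (hN : HasTrivialSocle R N) : HasTrivialSocle R (M →ₗ[R] N) := fun _ hf =>
  LinearMap.ext fun m => hN _ fun r hr => LinearMap.congr_fun (hf r hr) m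

theorem not_isSimpleModule (hM : HasTrivialSocle R M) : ¬IsSimpleModule R M := fun _ => by
  have hann : Module.annihilator R M = maximalIdeal R :=
    eq_maximalIdeal IsSimpleModule.annihilator_isMaximal
  have := IsSimpleModule.nontrivial R M
  obtain ⟨m, hm⟩ := exists_ne (0 : M)
  exact hm (hM m fun r hr => Module.mem_annihilator.1 (hann ▸ hr) m)

theorem eq_bot_of_isFiniteLength (hM : HasTrivialSocle R M) (L : Submodule R M)
    (hL : IsFiniteLength R L) : L = ⊥ := by
  obtain ⟨_, _⟩ := isFiniteLength_iff_isNoetherian_isArtinian.1 hL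
  obtain h_bot | ⟨A, hA, -⟩ := eq_bot_or_exists_atom_le (⊤ : Submodule R L)
  · exact Submodule.subsingleton_iff_eq_bot.1
      ((Submodule.subsingleton_iff R).1 (subsingleton_of_bot_eq_top h_bot.symm))
  · have hA_socle : HasTrivialSocle R A :=
      hM.of_injective (L.subtype ∘ₗ A.subtype) (L.injective_subtype.comp A.injective_subtype)
    exact absurd (isSimpleModule_iff_isAtom.2 hA) hA_socle.not_isSimpleModule

end HasTrivialSocle

theorem hasTrivialSocle_quotSMulTop {a x y : R} (ha : IsSMulRegular N a)
    (hx : x ∈ maximalIdeal R) (hy : y ∈ maximalIdeal R) (hxy : IsWeaklyRegular N [x, y]) :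
    HasTrivialSocle R (QuotSMulTop a N) := by
  obtain ⟨hx_reg, hy_reg, -⟩ := by simpa only [isWeaklyRegular_cons_iff] using hxy
  intro z hz
  obtain ⟨z, rfl⟩ := Submodule.mkQ_surjective _ z
  obtain ⟨u, hu⟩ : ∃ u, a • u = x • z := quotSMulTop_mk_eq_zero_iff.1 (hz x hx)
  obtain ⟨v, hv⟩ : ∃ v, a • v = y • z := quotSMulTop_mk_eq_zero_iff.1 (hz y hy)
  have huv : x • v = y • u := ha (by simp only [smul_comm a, hu, hv, smul_comm x y])
  obtain ⟨w, rfl⟩ : ∃ w, x • w = u := quotSMulTop_mk_eq_zero_iff.1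
    (hy_reg.right_eq_zero_of_smul (quotSMulTop_mk_eq_zero_iff.2 ⟨v, huv⟩))
  exact quotSMulTop_mk_eq_zero_iff.2 ⟨w, hx_reg ((smul_comm x a w).trans hu)⟩

end TrivialSocle

section ExtensionObstruction

open scoped Pointwise

variable {R F N : Type*} [CommRing R] [AddCommGroup F] [Module R F] [AddCommGroup N] [Module R N]
  {K : Submodule R F} {a : R}

/-- If `aF ⊆ K`, the obstruction to extending `f : K → N` along `K ⊆ F` is the map
`F / K → N / aN` induced by `p ↦ f (a p)`. -/
def extensionObstruction (K : Submodule R F) (a : R) (haK : ∀ p : F, a • p ∈ K) :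
    (K →ₗ[R] N) →ₗ[R] (F ⧸ K →ₗ[R] QuotSMulTop a N) where
  toFun f := K.mapQ (a • ⊤) (f ∘ₗ (LinearMap.lsmul R F a).codRestrict K haK) fun p hp =>
    (Submodule.mem_smul_pointwise_iff_exists _ _ _).2
      ⟨f ⟨p, hp⟩, Submodule.mem_top, (map_smul f a _).symm⟩
  map_add' f g := by ext; simp
  map_smul' r f := by ext; simp

theorem extensionObstruction_eq_zero_iff (haK : ∀ p : F, a • p ∈ K) {f : K →ₗ[R] N} :
    extensionObstruction K a haK f = 0 ↔ ∀ p, ∃ n, a • n = f ⟨a • p, haK p⟩ := by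
  rw [LinearMap.ext_iff, K.mkQ_surjective.forall]
  exact forall_congr' fun p => quotSMulTop_mk_eq_zero_iff

theorem exact_lcomp_subtype_extensionObstruction (haK : ∀ p : F, a • p ∈ K)
    (ha : IsSMulRegular N a) :
    Function.Exact (LinearMap.lcomp R N K.subtype) (extensionObstruction (N := N) K a haK) := by
  intro f
  rw [extensionObstruction_eq_zero_iff]
  refine ⟨fun hdiv => ?_, ?_⟩
  · choose g hg using hdiv
    let scaled : F →ₗ[R] K := (LinearMap.lsmul R F a).codRestrict K haK
    have hg_scaled (p : F) : a • g p = f (scaled p) := hg p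
    let extension : F →ₗ[R] N :=
      { toFun := g
        map_add' p q := ha <| by simp only [smul_add, hg_scaled, map_add]
        map_smul' r p := ha <| by
          simp only [smul_comm a r, hg_scaled, map_smul, RingHom.id_apply] }
    exact ⟨extension, LinearMap.ext fun k => ha ((hg k).trans (map_smul f a k))⟩
  · rintro ⟨g, rfl⟩ p
    exact ⟨g p, (map_smul g a p).symm⟩

end ExtensionObstruction

section ExtOne

universe u v

variable {R : Type u} [CommRing R]

theorem exists_injective_of_surjective_of_ker_eq {A B C : Type*} [AddCommGroup A] [Module R A]
    [AddCommGroup B] [Module R B] [AddCommGroup C] [Module R C] {θ : A →ₗ[R] B} {φ : A →ₗ[R] C}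
    (hθ : Function.Surjective θ) (hker : LinearMap.ker θ = LinearMap.ker φ) :
    ∃ ψ : B →ₗ[R] C, Function.Injective ψ :=
  ⟨(LinearMap.ker θ).liftQ φ hker.le ∘ₗ (θ.quotKerEquivOfSurjective hθ).symm.toLinearMap,
    (LinearMap.ker_eq_bot.1 (Submodule.ker_liftQ_eq_bot _ _ hker.le hker.ge)).comp
      (θ.quotKerEquivOfSurjective hθ).symm.injective⟩

theorem surjective_codRestrict_ker_of_exact {A B C : Type*} [AddCommGroup A] [Module R A]
    [AddCommGroup B] [Module R B] [AddCommGroup C] [Module R C] {f : A →ₗ[R] B} {g : B →ₗ[R] C}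
    (hfg : Function.Exact f g) :
    Function.Surjective (f.codRestrict (LinearMap.ker g) hfg.apply_apply_eq_zero) := by
  rintro ⟨b, hb⟩
  obtain ⟨a, rfl⟩ := (hfg b).1 hb
  exact ⟨a, rfl⟩

theorem exists_surjective_homology_of_exact (S : ShortComplex (ModuleCat.{v} R)) {Z : Type*}
    [AddCommGroup Z] [Module R Z] (j : Z →ₗ[R] S.X₂) (hj : Function.Exact j S.g.hom) :
    ∃ θ : Z →ₗ[R] S.homology, Function.Surjective θ ∧
      ∀ z, θ z = 0 ↔ j z ∈ LinearMap.range S.f.hom := by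
  let toCycles : Z →ₗ[R] LinearMap.ker S.g.hom := j.codRestrict _ hj.apply_apply_eq_zero
  let e := S.moduleCatHomologyIso.toLinearEquiv.symm
  refine ⟨e.toLinearMap ∘ₗ (LinearMap.range S.moduleCatToCycles).mkQ ∘ₗ toCycles,
    e.surjective.comp ((Submodule.mkQ_surjective _).comp (surjective_codRestrict_ker_of_exact hj)),
    fun z => e.map_eq_zero_iff.trans ((Submodule.Quotient.mk_eq_zero _).trans ?_)⟩
  simp only [LinearMap.mem_range, Subtype.ext_iff]
  rfl

variable [Small.{v} R] {I N : Type v} [AddCommGroup I] [Module R I] [AddCommGroup N] [Module R N]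

/-- `Ext¹_R(I, N)` as an `R`-module, for modules in a universe `v` large enough that module
categories have enough projectives. -/
noncomputable abbrev extOne (R : Type u) [CommRing R] [Small.{v} R] (I N : Type v)
    [AddCommGroup I] [Module R I] [AddCommGroup N] [Module R N] : ModuleCat.{v} R :=
  ((Ext R (ModuleCat.{v} R) 1).obj (Opposite.op (ModuleCat.of R I))).obj (ModuleCat.of R N)

theorem exists_exact_lcomp_extOne (P : ProjectiveResolution (ModuleCat.of R I)) :
    ∃ θ : (LinearMap.ker (P.π.f 0).hom →ₗ[R] N) →ₗ[R] extOne R I N,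
      Function.Exact (LinearMap.lcomp R N (LinearMap.ker (P.π.f 0).hom).subtype) θ ∧
        Function.Surjective θ := by
  let d₂ : P.complex.X 2 →ₗ[R] P.complex.X 1 := (P.complex.d 2 1).hom
  let d₁ : P.complex.X 1 →ₗ[R] P.complex.X 0 := (P.complex.d 1 0).hom
  let π : P.complex.X 0 →ₗ[R] I := (P.π.f 0).hom
  have hd₂ : Function.Exact d₂ d₁ :=
    (ShortComplex.ShortExact.moduleCat_exact_iff_function_exact _).1 (P.exact_succ 0)
  have hd₁ : Function.Exact d₁ π :=
    (ShortComplex.ShortExact.moduleCat_exact_iff_function_exact _).1 P.exact₀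
  let toKer : P.complex.X 1 →ₗ[R] LinearMap.ker π := d₁.codRestrict _ hd₁.apply_apply_eq_zero
  have htoKer : Function.Surjective toKer := surjective_codRestrict_ker_of_exact hd₁
  have hd₂_toKer : Function.Exact d₂ toKer := fun q => Subtype.ext_iff.trans (hd₂ q)
  let C := P.complex.linearYonedaObj R (ModuleCat.of R N)
  let e : extOne R I N ≃ₗ[R] (C.sc' 0 1 2).homology := (P.isoExt 1 _ ≪≫
    ShortComplex.homologyMapIso (C.isoSc' 0 1 2 (by simp) (by simp))).toLinearEquiv
  let toCochain : (LinearMap.ker π →ₗ[R] N) →ₗ[R] (C.sc' 0 1 2).X₂ :=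
    (ModuleCat.homLinearEquiv (S := R) (M := P.complex.X 1)
      (N := ModuleCat.of R N)).symm.toLinearMap ∘ₗ LinearMap.lcomp R N toKer
  have h_exact : Function.Exact toCochain (C.sc' 0 1 2).g.hom :=
    fun (z : P.complex.X 1 ⟶ ModuleCat.of R N) =>
      (ModuleCat.hom_ext_iff (f := P.complex.d 2 1 ≫ z) (g := 0)).trans <|
        (LinearMap.exact_lcomp_of_exact_of_surjective N hd₂_toKer htoKer z.hom).trans <|
          exists_congr fun _ => ModuleCat.hom_ext_iff.symm
  obtain ⟨θ, hθ_surj, hθ⟩ := exists_surjective_homology_of_exact _ toCochain h_exact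
  refine ⟨e.symm.toLinearMap ∘ₗ θ, fun f => ?_, e.symm.surjective.comp hθ_surj⟩
  refine e.symm.map_eq_zero_iff.trans ((hθ f).trans ⟨?_, ?_⟩)
  · rintro ⟨(w : P.complex.X 0 ⟶ ModuleCat.of R N), hw⟩
    exact ⟨w.hom, (LinearMap.cancel_right htoKer).1 (ModuleCat.hom_ext_iff.1 hw)⟩
  · rintro ⟨g, rfl⟩
    exact ⟨ModuleCat.ofHom g, rfl⟩

theorem exists_injective_extOne_to_hom_quotSMulTop {a : R} (ha : IsSMulRegular N a)
    (haI : ∀ i : I, a • i = 0) :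
    ∃ ψ : extOne R I N →ₗ[R] (I →ₗ[R] QuotSMulTop a N), Function.Injective ψ := by
  obtain ⟨P⟩ := (inferInstance : HasProjectiveResolution (ModuleCat.of R I)).out
  let π : P.complex.X 0 →ₗ[R] I := (P.π.f 0).hom
  have hπ : Function.Surjective π := (ModuleCat.epi_iff_surjective (P.π.f 0)).1 inferInstance
  have haK (p : P.complex.X 0) : a • p ∈ LinearMap.ker π := by
    rw [LinearMap.mem_ker, map_smul, haI]
  obtain ⟨θ, hθ, hθ_surj⟩ := exists_exact_lcomp_extOne (N := N) P
  let obs := extensionObstruction (N := N) (LinearMap.ker π) a haK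
  have hobs : Function.Exact _ obs := exact_lcomp_subtype_extensionObstruction haK ha
  have hker : LinearMap.ker θ = LinearMap.ker obs :=
    hθ.linearMap_ker_eq.trans hobs.linearMap_ker_eq.symm
  obtain ⟨ψ, hψ⟩ := exists_injective_of_surjective_of_ker_eq hθ_surj hker
  let e : (_ ⧸ LinearMap.ker π →ₗ[R] QuotSMulTop a N) ≃ₗ[R] (I →ₗ[R] QuotSMulTop a N) :=
    (π.quotKerEquivOfSurjective hπ).congrLeft _ R
  exact ⟨e.toLinearMap ∘ₗ ψ, e.injective.comp hψ⟩

end ExtOne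

theorem ext_one_dual_is_pure_general {R : Type u} {I M : Type v} [CommRing R] [IsLocalRing R]
    [IsNoetherianRing R] [Small.{v} R] [AddCommGroup I] [Module R I] [Module.Finite R I]
    [AddCommGroup M] [Module R M] [Module.Finite R M] [Module.IsTorsionFree R M] {x y : R}
    (hx : x ∈ IsLocalRing.maximalIdeal R) (hy : y ∈ IsLocalRing.maximalIdeal R)
    (hxy : RingTheory.Sequence.IsWeaklyRegular M [x, y]) (htors : Module.IsTorsion R I) :
    Module.Finite R (extOne R I M) ∧ Module.IsTorsion R (extOne R I M) ∧
      ∀ N : Submodule R (extOne R I M), IsFiniteLength R N → N = ⊥ := by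
  obtain ⟨a, ha_ann, ha⟩ := Submodule.annihilator_top_inter_nonZeroDivisors htors
  have haI (i : I) : a • i = 0 := Submodule.mem_annihilator.1 ha_ann i Submodule.mem_top
  have ha_reg : IsSMulRegular M a := (isRegular_iff_mem_nonZeroDivisors.2 ha).isSMulRegular
  obtain ⟨ψ, hψ⟩ := exists_injective_extOne_to_hom_quotSMulTop (N := M) ha_reg haI
  have h_socle : HasTrivialSocle R (extOne R I M) :=
    (hasTrivialSocle_quotSMulTop ha_reg hx hy hxy).linearMap.of_injective ψ hψ
  refine ⟨.of_injective ψ hψ, fun e => ⟨⟨a, ha⟩, hψ ?_⟩, h_socle.eq_bot_of_isFiniteLength⟩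
  ext i
  rw [Submonoid.mk_smul, map_smul, LinearMap.smul_apply, ← map_smul, haI, map_zero, map_zero,
    LinearMap.zero_apply]

/-- Over a regular local ring `R` of Krull dimension `2`, if `I` is a finitely generated
torsion `R`-module with no nonzero finite-length submodule, then `Ext¹_R(I, R)` is again a
finitely generated torsion `R`-module with no nonzero finite-length submodule. -/
theorem ext_one_dual_is_pure {R : Type u} {I : Type u}
    [CommRing R] [IsLocalRing R] (hreg : IsRegularLocalRingOfDimTwo R)
    [AddCommGroup I] [Module R I] [Module.Finite R I]
    (htors : Module.IsTorsion R I)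
    (hpure : ∀ N : Submodule R I, IsFiniteLength R ↥N → N = ⊥) :
    Module.Finite R
        ↥(((Ext R (ModuleCat.{u} R) 1).obj (Opposite.op (ModuleCat.of R I))).obj
          (ModuleCat.of R R)) ∧
      Module.IsTorsion R
        ↥(((Ext R (ModuleCat.{u} R) 1).obj (Opposite.op (ModuleCat.of R I))).obj
          (ModuleCat.of R R)) ∧
      ∀ N : Submodule R
          ↥(((Ext R (ModuleCat.{u} R) 1).obj (Opposite.op (ModuleCat.of R I))).obj
            (ModuleCat.of R R)),
        IsFiniteLength R ↥N → N = ⊥ := by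
  obtain ⟨x, hx, y, hy, hxy⟩ := hreg.exists_isWeaklyRegular
  have : IsNoetherianRing R := hreg.1
  exact ext_one_dual_is_pure_general hx hy hxy htors
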